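/- For every finite nontrivial group G there exists a finite simple graph 𝒢 such that every vertex of 𝒢 has degree at least 2, 𝒢 contains no clique of size greater than 2 (no triangles), and the automorphism group of 𝒢 is isomorphic to G. -/

import Mathlib

/-- The automorphism group of a simple graph, as the subgroup of permutations
of the vertex set preserving adjacency. -/
def graphAut {V : Type} (𝒢 : SimpleGraph V) : Subgroup (Equiv.Perm V) where
  carrier := {f | ∀ x y, 𝒢.Adj (f x) (f y) ↔ 𝒢.Adj x y}
  one_mem' := by simp
  mul_mem' := by
    intro f g hf hg x y
    simp only [Equiv.Perm.mul_apply]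
    rw [hf, hg]
  inv_mem' := by
    intro f hf x y
    have := (hf (f⁻¹ x) (f⁻¹ y)).symm
    simpa using this

namespace Frucht

inductive Vtx (G : Type) : Type
  | l (g : G) (s : Option G)
  | p (g : G)
  | q (g : G)
  | c (x : Option G)

open Vtx

variable {G : Type} [Group G] [Fintype G]

def toSum : Vtx G → (G × Option G) ⊕ (G ⊕ (G ⊕ Option G))
  | l g s => Sum.inl (g, s)
  | p g => Sum.inr (Sum.inl g)
  | q g => Sum.inr (Sum.inr (Sum.inl g))
  | c x => Sum.inr (Sum.inr (Sum.inr x))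

theorem toSum_inj : Function.Injective (toSum (G := G)) := by
  intro a b h
  cases a <;> cases b <;> simp_all [toSum]

instance : Finite (Vtx G) := Finite.of_injective toSum toSum_inj

/-- rank of a layer -/
noncomputable def rk : Option G → ℕ
  | none => Fintype.card G
  | some s => (Fintype.equivFin G s : ℕ)

theorem rk_le (s : Option G) : rk s ≤ rk (none : Option G) := by
  cases s with
  | none => exact le_rfl
  | some s => exact (Fintype.equivFin G s).2.le

theorem rk_some_lt (s : G) : rk (some s) < rk (none : Option G) :=
  (Fintype.equivFin G s).2

theorem rk_inj : Function.Injective (rk (G := G)) := by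
  intro a b h
  rcases a with _ | a <;> rcases b with _ | b
  · rfl
  · have := rk_some_lt b; omega
  · have := rk_some_lt a; omega
  · have h' : Fintype.equivFin G a = Fintype.equivFin G b := Fin.ext h
    rw [(Fintype.equivFin G).injective h']

/-- adjacency from the layers to the rest -/
def half : Vtx G → Vtx G → Prop
  | l g _, p a => a = g
  | l g s, q a => ∃ t, s = some t ∧ a = g * t
  | l _ s, c x => rk s ≤ rk x
  | _, _ => False

def graph (G : Type) [Group G] [Fintype G] : SimpleGraph (Vtx G) where
  Adj a b := half a b ∨ half b a
  symm := ⟨fun _ _ h => h.symm⟩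
  loopless := ⟨fun a h => by cases a <;> simp [half] at h⟩

theorem adj_lp (g : G) (s a) : (graph G).Adj (l g s) (p a) ↔ a = g := by simp [graph, half]
theorem adj_lq (g : G) (s a) : (graph G).Adj (l g s) (q a) ↔ ∃ t, s = some t ∧ a = g * t := by
  simp [graph, half]
theorem adj_lc (g : G) (s x) : (graph G).Adj (l g s) (c x) ↔ rk s ≤ rk x := by simp [graph, half]
theorem adj_ll (g : G) (s h t) : ¬ (graph G).Adj (l g s) (l h t) := by simp [graph, half]

/-- side of the bipartition -/
def side : Vtx G → Bool
  | l _ _ => true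
  | _ => false

theorem adj_side {a b : Vtx G} (h : (graph G).Adj a b) : side a ≠ side b := by
  cases a <;> cases b <;> simp_all [graph, half, side]

theorem clique_le (s : Set (Vtx G)) (hs : (graph G).IsClique s) : s.ncard ≤ 2 := by
  have hinj : Set.InjOn (side (G := G)) s := by
    intro a ha b hb hab
    by_contra hne
    exact adj_side (hs ha hb hne) hab
  rw [← hinj.ncard_image]
  calc _ ≤ (Set.univ : Set Bool).ncard := Set.ncard_le_ncard (Set.subset_univ _) (Set.toFinite _)
    _ = 2 := by simp [Set.ncard_univ]

theorem two_le_of {S : Set (Vtx G)} {a b : Vtx G} (ha : a ∈ S) (hb : b ∈ S) (h : a ≠ b) :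
    2 ≤ S.ncard := by
  rw [← Set.ncard_pair h]
  exact Set.ncard_le_ncard (by rintro x (rfl | rfl) <;> assumption) (Set.toFinite _)

theorem deg_ge [Nontrivial G] (v : Vtx G) : 2 ≤ Set.ncard {w | (graph G).Adj v w} := by
  obtain ⟨u, hu⟩ := exists_ne (1 : G)
  cases v with
  | l g s =>
    exact two_le_of (a := p g) (b := c none) ((adj_lp _ _ _).2 rfl) ((adj_lc _ _ _).2 (rk_le s))
      (by simp)
  | p g =>
    exact two_le_of (a := l g none) (b := l g (some 1)) ((adj_lp _ _ _).2 rfl).symm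
      ((adj_lp _ _ _).2 rfl).symm (by simp)
  | q g =>
    exact two_le_of (a := l g (some 1)) (b := l (g * u⁻¹) (some u))
      ((adj_lq _ _ _).2 ⟨1, by simp⟩).symm
      ((adj_lq _ _ _).2 ⟨u, by simp⟩).symm (by simp [hu.symm])
  | c x =>
    exact two_le_of (a := l 1 x) (b := l u x) ((adj_lc _ _ _).2 le_rfl).symm
      ((adj_lc _ _ _).2 le_rfl).symm (by simp [hu.symm])

/-- degree -/
noncomputable def deg (v : Vtx G) : ℕ := Set.ncard {w | (graph G).Adj v w}

theorem deg_map (f : graphAut (graph G)) (v : Vtx G) : deg (f.1 v) = deg v := by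
  unfold deg
  have : {w | (graph G).Adj (f.1 v) w} = f.1 '' {w | (graph G).Adj v w} := by
    ext w
    constructor
    · intro h
      refine ⟨f.1.symm w, ?_, by simp⟩
      have := f.2 v (f.1.symm w)
      simp only [Equiv.apply_symm_apply] at this
      exact this.1 h
    · rintro ⟨w, h, rfl⟩
      exact (f.2 _ _).2 h
  rw [this, Set.ncard_image_of_injective _ f.1.injective]

theorem deg_z : deg (c none : Vtx G) = Fintype.card G * (Fintype.card G + 1) := by
  have : {w | (graph G).Adj (c none) w} = (fun y : G × Option G => l y.1 y.2) '' Set.univ := by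
    ext w
    cases w <;> simp [graph, half, rk_le]
  unfold deg
  rw [this, Set.ncard_image_of_injective, Set.ncard_univ]
  · simp [Nat.card_eq_fintype_card]
  · rintro ⟨a, b⟩ ⟨a', b'⟩ h
    simpa using h

theorem deg_lt [Nontrivial G] (v : Vtx G) (hv : v ≠ c none) : deg v < deg (c none : Vtx G) := by
  have hn : 2 ≤ Fintype.card G := Fintype.one_lt_card
  cases v with
  | l g s =>
    rw [deg_z]
    have h1 : {w | (graph G).Adj (l g s) w} ⊆
        insert (p g) (insert (q (g * s.getD 1)) (c '' Set.univ)) := by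
      intro w hw
      cases w with
      | l a b => exact absurd hw (adj_ll _ _ _ _)
      | p a => simp [(adj_lp _ _ _).1 hw]
      | q a => obtain ⟨t, rfl, rfl⟩ := (adj_lq _ _ _).1 hw; simp
      | c x => simp
    have h2 := Set.ncard_le_ncard h1 (Set.toFinite _)
    have h3 := Set.ncard_insert_le (p g) (insert (q (g * s.getD 1)) (c '' Set.univ))
    have h4 := Set.ncard_insert_le (q (g * s.getD 1)) (c '' (Set.univ : Set (Option G)))
    have h5 : (c '' (Set.univ : Set (Option G))).ncard = Fintype.card G + 1 := by
      rw [Set.ncard_image_of_injective, Set.ncard_univ]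
      · simp [Nat.card_eq_fintype_card]
      · intro a b h; simpa using h
    unfold deg
    nlinarith
  | p g =>
    refine Set.ncard_lt_ncard ?_ (Set.toFinite _)
    obtain ⟨u, hu⟩ := exists_ne g
    refine (Set.ssubset_iff_of_subset ?_).2 ⟨l u none, ((adj_lc _ _ _).2 le_rfl).symm, ?_⟩
    · intro w hw
      cases w <;> simp_all [graph, half, rk_le]
    · intro h
      exact hu ((adj_lp _ _ _).1 h.symm).symm
  | q g =>
    refine Set.ncard_lt_ncard ?_ (Set.toFinite _)
    refine (Set.ssubset_iff_of_subset ?_).2 ⟨l 1 none, ((adj_lc _ _ _).2 le_rfl).symm, ?_⟩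
    · intro w hw
      cases w <;> simp_all [graph, half, rk_le]
    · intro h
      obtain ⟨t, ht, _⟩ := (adj_lq _ _ _).1 h.symm
      cases ht
  | c x =>
    refine Set.ncard_lt_ncard ?_ (Set.toFinite _)
    refine (Set.ssubset_iff_of_subset ?_).2 ⟨l 1 none, ((adj_lc _ _ _).2 le_rfl).symm, ?_⟩
    · intro w hw
      cases w <;> simp_all [graph, half, rk_le]
    · intro h
      have := (adj_lc _ _ _).1 h.symm
      exact hv (by rw [rk_inj (le_antisymm this (rk_le x))])

/-- comparison map -/
def cmp (g t : G) : Vtx G → Vtx G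
  | p _ => p g
  | q _ => q (g * t)
  | c x => c x
  | l a b => l a b

theorem deg_layer (g g' : G) (s s' : Option G) (h : rk s < rk s') :
    deg (l g' s') < deg (l g s) := by
  rcases s with _ | t
  · exact absurd h (not_lt.2 (rk_le s'))
  have hi : Set.InjOn (cmp g t) {w | (graph G).Adj (l g' s') w} := by
    intro a ha b hb hab
    cases a <;> cases b <;> simp_all [cmp, graph, half]
    obtain ⟨x, rfl, rfl⟩ := ha
    obtain ⟨y, hy, rfl⟩ := hb
    cases hy; rfl
  unfold deg
  rw [← hi.ncard_image]
  refine Set.ncard_lt_ncard ?_ (Set.toFinite _)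
  refine (Set.ssubset_iff_of_subset ?_).2 ⟨c (some t), (adj_lc _ _ _).2 le_rfl, ?_⟩
  · rintro _ ⟨w, hw, rfl⟩
    cases w with
    | l a b => exact absurd hw (adj_ll _ _ _ _)
    | p a => exact (adj_lp _ _ _).2 rfl
    | q a => exact (adj_lq _ _ _).2 ⟨t, rfl, rfl⟩
    | c x => exact (adj_lc _ _ _).2 (h.le.trans ((adj_lc _ _ _).1 hw))
  · rintro ⟨w, hw, hw'⟩
    cases w with
    | l a b => cases hw'
    | p a => cases hw'
    | q a => cases hw'
    | c x =>
      cases hw'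
      exact absurd ((adj_lc _ _ _).1 hw) (not_le.2 h)

theorem deg_layer_inj (g g' : G) (s s' : Option G) (h : deg (l g s) = deg (l g' s')) : s = s' := by
  rcases lt_trichotomy (rk s) (rk s') with h1 | h1 | h1
  · have := deg_layer g g' s s' h1; omega
  · exact rk_inj h1
  · have := deg_layer g' g s' s h1; omega

theorem map_z [Nontrivial G] (f : graphAut (graph G)) : f.1 (c none) = c none := by
  by_contra h
  have := deg_lt _ h
  rw [deg_map] at this
  exact lt_irrefl _ this

theorem map_l [Nontrivial G] (f : graphAut (graph G)) (g : G) (s : Option G) :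
    ∃ a, f.1 (l g s) = l a s := by
  have h : (graph G).Adj (f.1 (l g s)) (c none) := by
    have := (f.2 (l g s) (c none)).2 ((adj_lc _ _ _).2 (rk_le s))
    rwa [map_z] at this
  have hd := deg_map f (l g s)
  cases hv : f.1 (l g s) with
  | l a b => rw [hv] at hd; exact ⟨a, by rw [deg_layer_inj _ _ _ _ hd]⟩
  | p a => rw [hv] at h; simp [graph, half] at h
  | q a => rw [hv] at h; simp [graph, half] at h
  | c a => rw [hv] at h; simp [graph, half] at h

theorem side_map [Nontrivial G] (f : graphAut (graph G)) (v : Vtx G) (g : G) (s : Option G)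
    (h : f.1 v = l g s) : ∃ a, v = l a s := by
  obtain ⟨a, ha⟩ := map_l f⁻¹ g s
  refine ⟨a, ?_⟩
  rw [← ha, ← h]
  simp

theorem map_p [Nontrivial G] (f : graphAut (graph G)) :
    ∃ π : G → G, (∀ g, f.1 (p g) = p (π g)) ∧ ∀ g s, f.1 (l g s) = l (π g) s := by
  have hp : ∀ g, ∃ a, f.1 (p g) = p a := by
    intro g
    obtain ⟨b, hb⟩ := map_l f g none
    have h := (f.2 (l g none) (p g)).2 ((adj_lp _ _ _).2 rfl)
    rw [hb] at h
    cases hv : f.1 (p g) with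
    | l a s => rw [hv] at h; exact absurd h (adj_ll _ _ _ _)
    | p a => exact ⟨a, rfl⟩
    | q a =>
      rw [hv] at h
      obtain ⟨t, ht, _⟩ := (adj_lq _ _ _).1 h
      cases ht
    | c x =>
      rw [hv] at h
      have hx : x = none := rk_inj (le_antisymm (rk_le x) ((adj_lc _ _ _).1 h))
      rw [hx, ← map_z f] at hv
      cases f.1.injective hv
  choose π hπ using hp
  refine ⟨π, hπ, fun g s => ?_⟩
  obtain ⟨b, hb⟩ := map_l f g s
  have h := (f.2 (l g s) (p g)).2 ((adj_lp _ _ _).2 rfl)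
  rw [hb, hπ, adj_lp] at h
  rw [hb, h]

/-- action by left multiplication -/
def act (u : G) : Vtx G → Vtx G
  | l g s => l (u * g) s
  | p g => p (u * g)
  | q g => q (u * g)
  | c x => c x

theorem classify [Nontrivial G] (f : graphAut (graph G)) : ∃ u : G, ∀ v, f.1 v = act u v := by
  obtain ⟨π, hp, hl⟩ := map_p f
  have hinj : Function.Injective π := by
    intro a b h
    have : f.1 (p a) = f.1 (p b) := by rw [hp, hp, h]
    cases f.1.injective this; rfl
  have hsurj : Function.Surjective π := Finite.injective_iff_surjective.1 hinj
  have hq : ∀ h, ∃ a, f.1 (q h) = q a := by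
    intro h
    cases hv : f.1 (q h) with
    | l a s =>
      obtain ⟨b, hb⟩ := side_map f _ _ _ hv
      cases hb
    | p a =>
      obtain ⟨b, rfl⟩ := hsurj a
      rw [← hp] at hv
      cases f.1.injective hv
    | q a => exact ⟨a, rfl⟩
    | c x =>
      have h1 := (f.2 (l h (some 1)) (q h)).2 ((adj_lq _ _ _).2 ⟨1, by simp⟩)
      rw [hl, hv, adj_lc] at h1
      obtain ⟨u, hu⟩ := exists_ne h
      have h2 := f.2 (l u (some 1)) (q h)
      rw [hl, hv, adj_lc] at h2
      obtain ⟨t, ht, hh⟩ := (adj_lq _ _ _).1 (h2.1 h1)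
      cases ht
      simp at hh
      exact absurd hh.symm hu
  choose θ hθ using hq
  have key : ∀ g s, θ (g * s) = π g * s := by
    intro g s
    have h := (f.2 (l g (some s)) (q (g * s))).2 ((adj_lq _ _ _).2 ⟨s, rfl, rfl⟩)
    rw [hl, hθ, adj_lq] at h
    obtain ⟨t, ht, hh⟩ := h
    cases ht
    exact hh
  have hπ1 : ∀ s, θ s = π 1 * s := fun s => by simpa using key 1 s
  have hπ2 : ∀ s, π s = π 1 * s := fun s => by
    have := key s 1
    rw [← hπ1]; simpa using this.symm
  have hθs : Function.Surjective θ := fun a => ⟨(π 1)⁻¹ * a, by rw [hπ1]; simp⟩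
  refine ⟨π 1, fun v => ?_⟩
  cases v with
  | l g s => rw [hl, hπ2]; rfl
  | p g => rw [hp, hπ2]; rfl
  | q g => rw [hθ, hπ1]; rfl
  | c x =>
    cases hv : f.1 (c x) with
    | l a s =>
      obtain ⟨b, hb⟩ := side_map f _ _ _ hv
      cases hb
    | p a =>
      obtain ⟨b, rfl⟩ := hsurj a
      rw [← hp] at hv
      cases f.1.injective hv
    | q a =>
      obtain ⟨b, rfl⟩ := hθs a
      rw [← hθ] at hv
      cases f.1.injective hv
    | c y =>
      have h : ∀ s : Option G, rk s ≤ rk y ↔ rk s ≤ rk x := by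
        intro s
        have := f.2 (l 1 s) (c x)
        rwa [hl, hv, adj_lc, adj_lc] at this
      have : y = x := rk_inj (le_antisymm ((h y).1 le_rfl) ((h x).2 le_rfl))
      rw [this]; rfl

theorem act_mul (u v : G) (x : Vtx G) : act (u * v) x = act u (act v x) := by
  cases x <;> simp [act, mul_assoc]

theorem act_one (x : Vtx G) : act 1 x = x := by
  cases x <;> simp [act]

def actPerm (u : G) : Equiv.Perm (Vtx G) where
  toFun := act u
  invFun := act u⁻¹
  left_inv x := by rw [← act_mul]; simp [act_one]
  right_inv x := by rw [← act_mul]; simp [act_one]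

theorem actPerm_mem (u : G) : actPerm u ∈ graphAut (graph G) := by
  intro x y
  cases x <;> cases y <;> simp [actPerm, act, graph, half, mul_assoc]

def hom : G →* graphAut (graph G) where
  toFun u := ⟨actPerm u, actPerm_mem u⟩
  map_one' := by
    ext x
    exact act_one x
  map_mul' u v := by
    ext x
    exact act_mul u v x

theorem hom_bij [Nontrivial G] : Function.Bijective (hom (G := G)) := by
  constructor
  · intro u v h
    have h1 : act u (p 1) = act v (p 1) :=
      congrArg (fun f : graphAut (graph G) => f.1 (p 1)) h
    simpa [act] using h1
  · intro f
    obtain ⟨u, hu⟩ := classify f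
    refine ⟨u, ?_⟩
    ext x
    exact (hu x).symm

end Frucht

/-- **Frucht's theorem, strengthened.** Every finite nontrivial group is the
automorphism group of a finite triangle-free simple graph with minimum degree
at least 2. -/
theorem frucht_min_degree_two_triangle_free
    (G : Type) [Group G] [Fintype G] [Nontrivial G] :
    ∃ (V : Type) (_ : Fintype V) (𝒢 : SimpleGraph V),
      (∀ v : V, 2 ≤ Set.ncard {w : V | 𝒢.Adj v w}) ∧
      (∀ s : Set V, 𝒢.IsClique s → s.ncard ≤ 2) ∧
      Nonempty (graphAut 𝒢 ≃* G) := by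
  exact ⟨Frucht.Vtx G, Fintype.ofFinite _, Frucht.graph G, Frucht.deg_ge, Frucht.clique_le,
    ⟨(MulEquiv.ofBijective Frucht.hom Frucht.hom_bij).symm⟩⟩
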